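/- arXiv:2306.04603 — 2 statements merged into one kernel-verified Lean document; each statement's English description precedes it below -/
import Mathlib

section
/- The left star order on M_n(ℂ), defined by A ⋆≤ B if and only if A*A = A*B and the column space (range) of A is contained in the column space of B, is a partial order: it is reflexive, antisymmetric, and transitive. -/
open Matrix

/-!
If `Aᴴ * A = Aᴴ * B` and `Bᴴ * B = Bᴴ * A`, then expanding gives `(A - B)ᴴ * (A - B) = 0`, hence
`A = B`. For transitivity, `R(A) ⊆ R(B)` provides a factorization `A = B * X`, and multiplying
`Bᴴ * B = Bᴴ * C` on the left by `Xᴴ` turns it into `Aᴴ * B = Aᴴ * C`.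
-/

section

variable {l m n R : Type*}

theorem range_mulVecLin_le_range_mulVecLin_iff [CommSemiring R] [Fintype l] [Fintype n]
    {A : Matrix m n R} {B : Matrix m l R} :
    LinearMap.range A.mulVecLin ≤ LinearMap.range B.mulVecLin ↔
      ∃ X : Matrix l n R, A = B * X := by
  constructor
  · intro h
    have col_mem (j : n) : A.col j ∈ LinearMap.range B.mulVecLin :=
      h (A.range_mulVecLin ▸ Submodule.subset_span ⟨j, rfl⟩)
    choose x hx using col_mem
    exact ⟨(of x)ᵀ, ext fun i j => (congrFun (hx j) i).symm⟩
  · rintro ⟨X, rfl⟩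
    rw [mulVecLin_mul]
    exact LinearMap.range_comp_le_range _ _

theorem conjTranspose_mul_eq_of_range_le [CommSemiring R] [StarRing R] [Fintype l] [Fintype m]
    [Fintype n] {A : Matrix m n R} {B C : Matrix m l R}
    (hAB : LinearMap.range A.mulVecLin ≤ LinearMap.range B.mulVecLin)
    (hBC : Bᴴ * B = Bᴴ * C) : Aᴴ * B = Aᴴ * C := by
  obtain ⟨X, rfl⟩ := range_mulVecLin_le_range_mulVecLin_iff.mp hAB
  simp only [conjTranspose_mul, Matrix.mul_assoc, hBC]

theorem eq_of_conjTranspose_mul_self_eq [NonUnitalRing R] [PartialOrder R] [StarRing R]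
    [StarOrderedRing R] [NoZeroDivisors R] [Fintype m] {A B : Matrix m n R}
    (hAB : Aᴴ * A = Aᴴ * B) (hBA : Bᴴ * B = Bᴴ * A) : A = B := by
  have hsub : (A - B)ᴴ * (A - B) = 0 := by
    rw [conjTranspose_sub, Matrix.sub_mul, Matrix.mul_sub, Matrix.mul_sub, hAB, hBA,
      sub_self, sub_self, sub_self]
  exact sub_eq_zero.mp (conjTranspose_mul_self_eq_zero.mp hsub)

/-- The left star order `A ⋆≤ B`, for rectangular matrices over a commutative star semiring; the
range of a matrix is encoded as the range of `Matrix.mulVecLin`. -/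
def LeftStarLE [CommSemiring R] [StarRing R] [Fintype m] [Fintype n] (A B : Matrix m n R) : Prop :=
  Aᴴ * A = Aᴴ * B ∧ LinearMap.range A.mulVecLin ≤ LinearMap.range B.mulVecLin

namespace LeftStarLE

variable [Fintype m] [Fintype n]

theorem refl [CommSemiring R] [StarRing R] (A : Matrix m n R) : LeftStarLE A A :=
  ⟨rfl, le_rfl⟩

theorem trans [CommSemiring R] [StarRing R] {A B C : Matrix m n R}
    (hAB : LeftStarLE A B) (hBC : LeftStarLE B C) : LeftStarLE A C :=
  ⟨hAB.1.trans (conjTranspose_mul_eq_of_range_le hAB.2 hBC.1), hAB.2.trans hBC.2⟩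

theorem antisymm [CommRing R] [PartialOrder R] [StarRing R] [StarOrderedRing R]
    [NoZeroDivisors R] {A B : Matrix m n R}
    (hAB : LeftStarLE A B) (hBA : LeftStarLE B A) : A = B :=
  eq_of_conjTranspose_mul_self_eq hAB.1 hBA.1

end LeftStarLE

theorem left_star_order_partialOrder_general [CommRing R] [PartialOrder R] [StarRing R]
    [StarOrderedRing R] [NoZeroDivisors R] [Fintype m] [Fintype n] :
    IsPartialOrder (Matrix m n R) LeftStarLE where
  refl := LeftStarLE.refl
  trans _ _ _ := LeftStarLE.trans
  antisymm _ _ := LeftStarLE.antisymm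

end

/-- The left star order on `M_n(ℂ)` is a partial order. -/
theorem left_star_order_partialOrder (n : ℕ) :
    Reflexive (fun A B : Matrix (Fin n) (Fin n) ℂ =>
      Aᴴ * A = Aᴴ * B ∧
        LinearMap.range A.mulVecLin ≤ LinearMap.range B.mulVecLin) ∧
    AntiSymmetric (fun A B : Matrix (Fin n) (Fin n) ℂ =>
      Aᴴ * A = Aᴴ * B ∧
        LinearMap.range A.mulVecLin ≤ LinearMap.range B.mulVecLin) ∧
    Transitive (fun A B : Matrix (Fin n) (Fin n) ℂ =>
      Aᴴ * A = Aᴴ * B ∧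
        LinearMap.range A.mulVecLin ≤ LinearMap.range B.mulVecLin) := by
  open scoped ComplexOrder in
  have h := left_star_order_partialOrder_general (m := Fin n) (n := Fin n) (R := ℂ)
  exact ⟨h.refl, h.antisymm, h.trans⟩
end

section
/- The right star order on M_n(ℂ), defined by A ≤⋆ B if and only if A·A* = B·A* and the column space (range) of A* is contained in the column space of B*, is a partial order: it is reflexive, antisymmetric, and transitive. -/
open Matrix

/-!
The equation `A * Aᴴ = B * Aᴴ` says that `A` and `B` agree as maps on the range of `Aᴴ`. If `A` is
below `B` and `B` below `C`, then `B` and `C` agree on the range of `Bᴴ`, which contains that of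
`Aᴴ`; hence `A` and `C` agree on the latter. For antisymmetry, the two equations make
`(A - B) * (A - B)ᴴ` vanish, and its diagonal entries are the squared norms of the rows of `A - B`.
-/

section

variable {l m n R : Type*}

theorem mul_eq_mul_iff_eqOn_range_mulVecLin [CommSemiring R] [Fintype m] [Fintype n]
    {M N : Matrix l m R} {P : Matrix m n R} :
    M * P = N * P ↔ Set.EqOn M.mulVecLin N.mulVecLin (LinearMap.range P.mulVecLin) := by
  simp only [LinearMap.coe_range, Set.eqOn_range, funext_iff, Function.comp_apply, mulVecLin_apply,
    mulVec_mulVec, ext_iff_mulVec]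

theorem eq_of_mul_conjTranspose_eq [NonUnitalRing R] [PartialOrder R] [StarRing R]
    [StarOrderedRing R] [NoZeroDivisors R] [Fintype n] {A B : Matrix m n R}
    (hA : A * Aᴴ = B * Aᴴ) (hB : B * Bᴴ = A * Bᴴ) : A = B := by
  have h : (A - B) * (A - B)ᴴ = 0 := by
    rw [conjTranspose_sub, Matrix.mul_sub, Matrix.sub_mul, Matrix.sub_mul, hA, hB, sub_self,
      sub_self, sub_self]
  exact sub_eq_zero.mp (self_mul_conjTranspose_eq_zero.mp h)

/-- The right star order on rectangular matrices: `A` is below `B` if `A * Aᴴ = B * Aᴴ` and the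
column space of `Aᴴ`, encoded as the range of `Aᴴ.mulVecLin`, lies in that of `Bᴴ`. -/
def RightStarLE [CommSemiring R] [Star R] [Fintype m] [Fintype n] (A B : Matrix m n R) : Prop :=
  A * Aᴴ = B * Aᴴ ∧ LinearMap.range Aᴴ.mulVecLin ≤ LinearMap.range Bᴴ.mulVecLin

namespace RightStarLE

variable [Fintype m] [Fintype n]

protected theorem refl [CommSemiring R] [Star R] (A : Matrix m n R) : RightStarLE A A :=
  ⟨rfl, le_rfl⟩

protected theorem trans [CommSemiring R] [Star R] {A B C : Matrix m n R}
    (hAB : RightStarLE A B) (hBC : RightStarLE B C) : RightStarLE A C := by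
  obtain ⟨hAB_mul, hAB_range⟩ := hAB
  obtain ⟨hBC_mul, hBC_range⟩ := hBC
  rw [mul_eq_mul_iff_eqOn_range_mulVecLin] at hAB_mul hBC_mul
  have hAC_mul : Set.EqOn A.mulVecLin C.mulVecLin (LinearMap.range Aᴴ.mulVecLin) :=
    hAB_mul.trans (hBC_mul.mono hAB_range)
  exact ⟨mul_eq_mul_iff_eqOn_range_mulVecLin.mpr hAC_mul, hAB_range.trans hBC_range⟩

protected theorem antisymm [CommRing R] [PartialOrder R] [StarRing R] [StarOrderedRing R]
    [NoZeroDivisors R] {A B : Matrix m n R}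
    (hAB : RightStarLE A B) (hBA : RightStarLE B A) : A = B :=
  eq_of_mul_conjTranspose_eq hAB.1 hBA.1

end RightStarLE

theorem right_star_order_partialOrder_general [CommRing R] [PartialOrder R] [StarRing R]
    [StarOrderedRing R] [NoZeroDivisors R] [Fintype m] [Fintype n] :
    IsPartialOrder (Matrix m n R) RightStarLE where
  refl := RightStarLE.refl
  trans _ _ _ := RightStarLE.trans
  antisymm _ _ := RightStarLE.antisymm

end

/-- The right star order on `M_n(ℂ)` is a partial order. -/
theorem right_star_order_partialOrder (n : ℕ) :
    Reflexive (fun A B : Matrix (Fin n) (Fin n) ℂ =>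
      A * Aᴴ = B * Aᴴ ∧
        LinearMap.range Aᴴ.mulVecLin ≤ LinearMap.range Bᴴ.mulVecLin) ∧
    AntiSymmetric (fun A B : Matrix (Fin n) (Fin n) ℂ =>
      A * Aᴴ = B * Aᴴ ∧
        LinearMap.range Aᴴ.mulVecLin ≤ LinearMap.range Bᴴ.mulVecLin) ∧
    Transitive (fun A B : Matrix (Fin n) (Fin n) ℂ =>
      A * Aᴴ = B * Aᴴ ∧
        LinearMap.range Aᴴ.mulVecLin ≤ LinearMap.range Bᴴ.mulVecLin) := by
  open scoped ComplexOrder in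
  have order := right_star_order_partialOrder_general (m := Fin n) (n := Fin n) (R := ℂ)
  exact ⟨order.refl, order.antisymm, order.trans⟩
end
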